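/- arXiv:2002.11914 — 2 statements merged into one kernel-verified Lean document; each statement's English description precedes it below -/
import Mathlib

section
/- Let 0<α<1, 0<r<1 and λ>0. Let y ∈ C([0,T]) ∩ C¹((0,T]) satisfy |y′(t)| ≤ t^{−r} for all 0<t≤T, and let Π_τ^λ y be a piecewise-constant function on the graded grid satisfying, for every 1≤k≤J: (1/Γ(1−α)) ∫_0^{t_k} (y − Π_τ^λ y)(t)((t_k−t)^{−α} − (t_{k−1}−t)_+^{−α}) dt + λ ∫_{t_{k−1}}^{t_k} (y − Π_τ^λ y)(t) dt = 0. Then ‖y − Π_τ^λ y‖_{L^∞(0,T)} ≤ C J^{−min{σ(1−r),1}}, where the constant C depends only on α, σ, r, T (in particular C is independent of λ and J). -/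
open MeasureTheory

/-- The graded temporal grid `t_j = (j/J)^σ T`. -/
noncomputable def tg (T σ : ℝ) (J j : ℕ) : ℝ := ((j : ℝ) / (J : ℝ)) ^ σ * T

/-- The truncated power `(s)_+^e`: equal to `s^e` for `s > 0` and to `0` otherwise. -/
noncomputable def pp (e s : ℝ) : ℝ := if 0 < s then s ^ e else 0

/-!
Summing the Galerkin equations turns them into `∫ s in 0..t n, e s * k (t n - s) = 0` for the error
`e = y - Π` and the kernel `k x = x ^ (-α) + λ Γ(1 - α)`. On each cell `e` oscillates by at most
some `D`, so it is its cell mean plus a zero-mean part bounded by `D`. As `k` is nonincreasing and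
the steps are nondecreasing, the zero-mean parts contribute at most `2 D` times the diagonal weight
of the triangular system satisfied by the means. As `k` is log-convex, the ratio of consecutive rows
of that system is nonincreasing along the row, so the off-diagonal part of each row is a nonnegative
combination, of total weight at most one, of the rows above it. Hence the means are at most `4 D`
and `|e| ≤ 5 D`, whatever `λ` is, while grading gives `D = O(J ^ (-min (σ (1 - r)) 1))`.
-/

open Set

section TriangularSystems

/-- `u / v` is nonincreasing on `{0, …, n}`, for positive `v`, stated without division; this is the
relation imposed on consecutive rows of a triangular system. -/
def RatioAntitone (n : ℕ) (u v : ℕ → ℝ) : Prop :=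
  ∀ i j, i ≤ j → j ≤ n → u j * v i ≤ u i * v j

variable {m n : ℕ} {u v w : ℕ → ℝ}

lemma RatioAntitone.mono (h : RatioAntitone n u v) (hmn : m ≤ n) : RatioAntitone m u v :=
  fun i j hij hj => h i j hij (hj.trans hmn)

lemma RatioAntitone.nonneg (h : RatioAntitone n u v) (hv : ∀ j ≤ n, 0 < v j) (hu : 0 ≤ u n) :
    ∀ j ≤ n, 0 ≤ u j := fun j hj =>
  nonneg_of_mul_nonneg_left ((mul_nonneg hu (hv j hj).le).trans (h j n hj le_rfl)) (hv n le_rfl)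

lemma RatioAntitone.sub_const_mul (h : RatioAntitone n u v) (b : ℝ) :
    RatioAntitone n (fun j => u j - b * v j) v :=
  fun i j hij hj => by linarith [h i j hij hj]

lemma RatioAntitone.trans (huv : RatioAntitone n u v) (hvw : RatioAntitone n v w)
    (hu : ∀ j ≤ n, 0 ≤ u j) (hv : ∀ j ≤ n, 0 < v j) (hw : ∀ j ≤ n, 0 ≤ w j) :
    RatioAntitone n u w := by
  intro i j hij hj
  refine le_of_mul_le_mul_right ?_ (hv j hj)
  calc u j * w i * v j = u j * (v j * w i) := by ring
    _ ≤ u j * (v i * w j) := mul_le_mul_of_nonneg_left (hvw i j hij hj) (hu j hj)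
    _ = u j * v i * w j := by ring
    _ ≤ u i * v j * w j := mul_le_mul_of_nonneg_right (huv i j hij hj) (hw j hj)
    _ = u i * w j * v j := by ring

lemma RatioAntitone.exists_eq_const_mul_add (h : RatioAntitone n u v) (hv : ∀ j ≤ n, 0 < v j)
    (hu : 0 ≤ u n) : ∃ b, 0 ≤ b ∧ ∃ w, (∀ j, u j = b * v j + w j) ∧ w n = 0 ∧
      (∀ j ≤ n, 0 ≤ w j) ∧ RatioAntitone n w v := by
  have hvn := hv n le_rfl
  have hlast : u n - u n / v n * v n = 0 := by field_simp; ring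
  have hratio := h.sub_const_mul (u n / v n)
  exact ⟨u n / v n, by positivity, fun j => u j - u n / v n * v j, fun j => by ring, hlast,
    hratio.nonneg hv hlast.ge, hratio⟩

variable {M : ℕ → ℕ → ℝ} {z : ℕ → ℝ} {B : ℝ}

-- Subtracting from `u` the multiple of row `n + 1` that kills its last entry leaves a vector
-- whose ratio to row `n` is again nonincreasing, so the induction descends through the rows.
lemma mul_abs_sum_le_of_ratioAntitone (hpos : ∀ n, ∀ j ≤ n, 0 < M n j)
    (hratio : ∀ n, RatioAntitone n (M (n + 1)) (M n)) (hcol : ∀ n, M (n + 1) 0 ≤ M n 0)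
    (hB : ∀ i ≤ n, |∑ j ∈ Finset.range (i + 1), M i j * z j| ≤ B)
    (hu : RatioAntitone n u (M n)) (hun : 0 ≤ u n) :
    M n 0 * |∑ j ∈ Finset.range (n + 1), u j * z j| ≤ u 0 * B := by
  induction n generalizing u with
  | zero =>
    have hB₀ : |M 0 0 * z 0| ≤ B := by simpa using hB 0 le_rfl
    calc M 0 0 * |∑ j ∈ Finset.range 1, u j * z j| = u 0 * |M 0 0 * z 0| := by
          rw [Finset.sum_range_one, abs_mul, abs_mul, abs_of_nonneg hun,
            abs_of_pos (hpos 0 0 le_rfl)]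
          ring
      _ ≤ u 0 * B := mul_le_mul_of_nonneg_left hB₀ hun
  | succ n ih =>
    obtain ⟨b, hb, w, hw, hw_last, hw_nonneg, hw_ratio⟩ :=
      hu.exists_eq_const_mul_add (hpos (n + 1)) hun
    have hw_ratio' : RatioAntitone n w (M n) :=
      (hw_ratio.mono n.le_succ).trans (hratio n) (fun j hj => hw_nonneg j (by lia))
        (fun j hj => hpos (n + 1) j (by lia)) fun j hj => (hpos n j hj).le
    have hw_bound := ih (fun i hi => hB i (by lia)) hw_ratio' (hw_nonneg n (by lia))
    have hsplit : ∑ j ∈ Finset.range (n + 2), u j * z j =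
        b * ∑ j ∈ Finset.range (n + 2), M (n + 1) j * z j +
          ∑ j ∈ Finset.range (n + 1), w j * z j := by
      simp only [hw, add_mul, Finset.sum_add_distrib, mul_assoc, ← Finset.mul_sum]
      rw [Finset.sum_range_succ (fun j => w j * z j), hw_last, zero_mul, add_zero]
    have hM₀ := (hpos (n + 1) 0 n.succ.zero_le).le
    calc M (n + 1) 0 * |∑ j ∈ Finset.range (n + 2), u j * z j|
        ≤ M (n + 1) 0 * (b * B + |∑ j ∈ Finset.range (n + 1), w j * z j|) := by
          rw [hsplit]
          refine mul_le_mul_of_nonneg_left ((abs_add_le _ _).trans ?_) hM₀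
          rw [abs_mul, abs_of_nonneg hb]
          gcongr
          exact hB (n + 1) le_rfl
      _ ≤ b * M (n + 1) 0 * B + M n 0 * |∑ j ∈ Finset.range (n + 1), w j * z j| := by
          linarith [mul_le_mul_of_nonneg_right (hcol n)
            (abs_nonneg (∑ j ∈ Finset.range (n + 1), w j * z j))]
      _ ≤ b * M (n + 1) 0 * B + w 0 * B := by gcongr
      _ = u 0 * B := by rw [hw 0]; ring

lemma mul_abs_le_two_mul_of_ratioAntitone (hpos : ∀ n, ∀ j ≤ n, 0 < M n j)
    (hratio : ∀ n, RatioAntitone n (M (n + 1)) (M n)) (hcol : ∀ n, M (n + 1) 0 ≤ M n 0)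
    (hB : ∀ i ≤ n, |∑ j ∈ Finset.range (i + 1), M i j * z j| ≤ B) :
    M n n * |z n| ≤ 2 * B := by
  have hrow := hB n le_rfl
  rw [← abs_of_pos (hpos n n le_rfl), ← abs_mul]
  rw [Finset.sum_range_succ] at hrow
  suffices hprev : |∑ j ∈ Finset.range n, M n j * z j| ≤ B by
    rw [abs_le] at *
    constructor <;> linarith
  cases n with
  | zero => simpa using (abs_nonneg _).trans hrow
  | succ m =>
    have hcomb := mul_abs_sum_le_of_ratioAntitone hpos hratio hcol
      (fun i hi => hB i (by lia)) (hratio m) (hpos (m + 1) m m.le_succ).le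
    have hB_nonneg : 0 ≤ B := (abs_nonneg _).trans hrow
    exact le_of_mul_le_mul_left (hcomb.trans (mul_le_mul_of_nonneg_right (hcol m) hB_nonneg))
      (hpos m 0 m.zero_le)

end TriangularSystems

section Kernel

/-- Positive, nonincreasing, log-convex kernels on `(0, ∞)` that are integrable near `0`.
Log-convexity is encoded as monotonicity of the ratios `k (x + h) / k x` in `x`; the values of
`k` on `(-∞, 0]` are irrelevant. -/
structure IsLogConvexKernel (k : ℝ → ℝ) : Prop where
  pos : ∀ ⦃x⦄, 0 < x → 0 < k x
  antitoneOn : AntitoneOn k (Ioi 0)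
  mul_le_mul : ∀ ⦃x x' h⦄, 0 < x → x ≤ x' → 0 ≤ h → k (x + h) * k x' ≤ k (x' + h) * k x
  intervalIntegrable : ∀ ⦃b⦄, 0 ≤ b → IntervalIntegrable k volume 0 b

lemma isLogConvexKernel_rpow_neg {α : ℝ} (hα0 : 0 ≤ α) (hα1 : α < 1) :
    IsLogConvexKernel fun x => x ^ (-α) where
  pos x hx := Real.rpow_pos_of_pos hx _
  antitoneOn x hx _ _ hxy := Real.rpow_le_rpow_of_nonpos hx hxy (by linarith)
  mul_le_mul x x' h hx hxx' hh := by
    have hx' : 0 < x' := hx.trans_le hxx'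
    rw [← Real.mul_rpow (by positivity) hx'.le, ← Real.mul_rpow (by positivity) hx.le]
    exact Real.rpow_le_rpow_of_nonpos (by positivity) (by nlinarith) (by linarith)
  intervalIntegrable _ _ := intervalIntegral.intervalIntegrable_rpow' (by linarith)

namespace IsLogConvexKernel

variable {k : ℝ → ℝ} {a b a' b' c c' : ℝ}

lemma add_le_add (hk : IsLogConvexKernel k) {x x' h : ℝ} (hx : 0 < x) (hxx' : x ≤ x')
    (hh : 0 ≤ h) : k (x + h) + k x' ≤ k (x' + h) + k x := by
  have hx' : 0 < x' := hx.trans_le hxx'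
  have hxh : k (x + h) ≤ k x := hk.antitoneOn hx (mem_Ioi.2 (by linarith)) (by linarith)
  have hkx' : k x' ≤ k x := hk.antitoneOn hx hx' hxx'
  refine le_of_mul_le_mul_right ?_ (hk.pos hx)
  nlinarith [hk.mul_le_mul hx hxx' hh, mul_nonneg (sub_nonneg.2 hxh) (sub_nonneg.2 hkx')]

lemma add_const (hk : IsLogConvexKernel k) {L : ℝ} (hL : 0 ≤ L) :
    IsLogConvexKernel fun x => k x + L where
  pos x hx := add_pos_of_pos_of_nonneg (hk.pos hx) hL
  antitoneOn x hx y hy hxy := add_le_add_left (hk.antitoneOn hx hy hxy) L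
  mul_le_mul x x' h hx hxx' hh := by
    linarith [hk.mul_le_mul hx hxx' hh, mul_le_mul_of_nonneg_left (hk.add_le_add hx hxx' hh) hL]
  intervalIntegrable _ hb := (hk.intervalIntegrable hb).add intervalIntegrable_const

lemma intervalIntegrable_comp_sub (hk : IsLogConvexKernel k) (hac : a ≤ c) (hbc : b ≤ c) :
    IntervalIntegrable (fun s => k (c - s)) volume a b := by
  simpa using ((hk.intervalIntegrable (sub_nonneg.2 hac)).symm.trans
    (hk.intervalIntegrable (sub_nonneg.2 hbc))).comp_sub_left c

lemma monotoneOn_comp_sub (hk : IsLogConvexKernel k) (hbc : b < c) :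
    MonotoneOn (fun s => k (c - s)) (Icc a b) := fun s hs s' hs' hss' =>
  hk.antitoneOn (mem_Ioi.2 (by linarith [hs'.2])) (mem_Ioi.2 (by linarith [hs.2]))
    (by linarith)

lemma integral_comp_sub_pos (hk : IsLogConvexKernel k) (hab : a < b) (hbc : b ≤ c) :
    0 < ∫ s in a..b, k (c - s) :=
  intervalIntegral.intervalIntegral_pos_of_pos_on
    (hk.intervalIntegrable_comp_sub (hab.le.trans hbc) hbc)
    (fun s hs => hk.pos (by linarith [hs.2])) hab

lemma integral_comp_sub_antitone (hk : IsLogConvexKernel k) (hab : a ≤ b) (hbc : b ≤ c)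
    (hcc' : c ≤ c') : ∫ s in a..b, k (c' - s) ≤ ∫ s in a..b, k (c - s) := by
  refine intervalIntegral.integral_mono_on_of_le_Ioo hab
    (hk.intervalIntegrable_comp_sub (by linarith) (by linarith))
    (hk.intervalIntegrable_comp_sub (by linarith) hbc) fun s hs => ?_
  exact hk.antitoneOn (mem_Ioi.2 (by linarith [hs.2])) (mem_Ioi.2 (by linarith [hs.2]))
    (by linarith)

lemma integral_comp_sub_mul_le (hk : IsLogConvexKernel k) (hab : a ≤ b) (hbc : b ≤ c)
    (hcc' : c ≤ c') :
    (∫ s in a..b, k (c' - s)) * k (c - a) ≤ k (c' - a) * ∫ s in a..b, k (c - s) := by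
  rw [← intervalIntegral.integral_mul_const, ← intervalIntegral.integral_const_mul]
  refine intervalIntegral.integral_mono_on_of_le_Ioo hab
    ((hk.intervalIntegrable_comp_sub (by linarith) (by linarith)).mul_const _)
    ((hk.intervalIntegrable_comp_sub (by linarith) hbc).const_mul _) fun s hs => ?_
  have h := hk.mul_le_mul (x := c - s) (x' := c - a) (h := c' - c)
    (by linarith [hs.2]) (by linarith [hs.1]) (by linarith)
  simpa only [sub_add_sub_cancel'] using h

lemma mul_integral_comp_sub_le (hk : IsLogConvexKernel k) (hab : a ≤ b) (hba' : b ≤ a')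
    (ha'c : a' < c) (hcc' : c ≤ c') :
    k (c' - a') * ∫ s in a..b, k (c - s) ≤ (∫ s in a..b, k (c' - s)) * k (c - a') := by
  rw [← intervalIntegral.integral_mul_const, ← intervalIntegral.integral_const_mul]
  refine intervalIntegral.integral_mono_on_of_le_Ioo hab
    ((hk.intervalIntegrable_comp_sub (by linarith) (by linarith)).const_mul _)
    ((hk.intervalIntegrable_comp_sub (by linarith) (by linarith)).mul_const _) fun s hs => ?_
  have h := hk.mul_le_mul (x := c - a') (x' := c - s) (h := c' - c)
    (by linarith) (by linarith [hs.2]) (by linarith)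
  simpa only [sub_add_sub_cancel'] using h

lemma integral_comp_sub_mul_integral_le (hk : IsLogConvexKernel k) (hab : a < b) (hba' : b ≤ a')
    (hab' : a' < b') (hbc' : b' ≤ c) (hcc' : c ≤ c') :
    (∫ s in a'..b', k (c' - s)) * ∫ s in a..b, k (c - s) ≤
      (∫ s in a..b, k (c' - s)) * ∫ s in a'..b', k (c - s) := by
  have ha'c : 0 < c - a' := by linarith
  have hleft := hk.integral_comp_sub_mul_le hab'.le hbc' hcc'
  have hright := hk.mul_integral_comp_sub_le hab.le hba' (by linarith) hcc'
  have hI := hk.integral_comp_sub_pos hab (c := c) (by linarith)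
  have hI' := hk.integral_comp_sub_pos hab' hbc'
  refine le_of_mul_le_mul_right ?_ (hk.pos ha'c)
  linarith [mul_le_mul_of_nonneg_right hleft hI.le, mul_le_mul_of_nonneg_right hright hI'.le]

lemma mul_le_integral (hk : IsLogConvexKernel k) (hb : 0 < b) : b * k b ≤ ∫ x in 0..b, k x := by
  calc b * k b = ∫ _ in 0..b, k b := by simp
    _ ≤ ∫ x in 0..b, k x :=
      intervalIntegral.integral_mono_on_of_le_Ioo hb.le intervalIntegrable_const
        (hk.intervalIntegrable hb.le) fun x hx => hk.antitoneOn hx.1 hb hx.2.le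

lemma integral_mono (hk : IsLogConvexKernel k) (ha : 0 ≤ a) (hab : a ≤ b) :
    ∫ x in 0..a, k x ≤ ∫ x in 0..b, k x := by
  rw [← intervalIntegral.integral_add_adjacent_intervals (hk.intervalIntegrable ha)
    ((hk.intervalIntegrable ha).symm.trans (hk.intervalIntegrable (ha.trans hab)))]
  refine le_add_of_nonneg_right ?_
  rw [intervalIntegral.integral_of_le hab]
  exact setIntegral_nonneg measurableSet_Ioc fun x hx => (hk.pos (ha.trans_lt hx.1)).le

end IsLogConvexKernel

/-- The entry `∫ s in t j..t (j+1), k (t (n+1) - s)` of the lower triangular matrix of the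
convolution with `k` on piecewise constant functions; row `n` belongs to the time `t (n+1)`. -/
noncomputable def cellWeight (k : ℝ → ℝ) (t : ℕ → ℝ) (n j : ℕ) : ℝ :=
  ∫ s in t j..t (j + 1), k (t (n + 1) - s)

variable {k : ℝ → ℝ} {t : ℕ → ℝ} {n j : ℕ}

lemma cellWeight_self : cellWeight k t n n = ∫ x in 0..t (n + 1) - t n, k x := by
  rw [cellWeight, intervalIntegral.integral_comp_sub_left, sub_self]

lemma cellWeight_pos (hk : IsLogConvexKernel k) (ht : StrictMono t) (hj : j ≤ n) :
    0 < cellWeight k t n j :=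
  hk.integral_comp_sub_pos (ht j.lt_succ_self) (ht.monotone (by lia))

lemma cellWeight_succ_le (hk : IsLogConvexKernel k) (ht : StrictMono t) (hj : j ≤ n) :
    cellWeight k t (n + 1) j ≤ cellWeight k t n j :=
  hk.integral_comp_sub_antitone (ht j.lt_succ_self).le (ht.monotone (by lia))
    (ht.monotone (by lia))

lemma ratioAntitone_cellWeight (hk : IsLogConvexKernel k) (ht : StrictMono t) (n : ℕ) :
    RatioAntitone n (cellWeight k t (n + 1)) (cellWeight k t n) := by
  intro i j hij hj
  rcases hij.eq_or_lt with rfl | hij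
  · exact le_rfl
  · exact hk.integral_comp_sub_mul_integral_le (ht i.lt_succ_self) (ht.monotone hij)
      (ht j.lt_succ_self) (ht.monotone (by lia)) (ht.monotone (by lia))

end Kernel

section CellEstimates

variable {v f : ℝ → ℝ} {a b D : ℝ}

lemma ae_mem_Ioc_imp_of_forall_mem_Ioo {p : ℝ → Prop} (h : ∀ s ∈ Ioo a b, p s) :
    ∀ᵐ s, s ∈ Ioc a b → p s := by
  filter_upwards [Measure.ae_ne volume b] with s hsb hs
  exact h s ⟨hs.1, hs.2.lt_of_ne hsb⟩

lemma intervalIntegrable_mul_of_abs_le (hab : a ≤ b) (hv : IntervalIntegrable v volume a b)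
    (hD : ∀ s ∈ Ioo a b, |v s| ≤ D) (hf : IntervalIntegrable f volume a b) :
    IntervalIntegrable (fun s => v s * f s) volume a b := by
  rw [intervalIntegrable_iff_integrableOn_Ioo_of_le hab] at *
  exact hf.bdd_mul hv.aestronglyMeasurable (ae_restrict_of_forall_mem measurableSet_Ioo hD)

lemma abs_integral_mul_le_mul_integral (hab : a ≤ b) (hD : ∀ s ∈ Ioo a b, |v s| ≤ D)
    (hf : IntervalIntegrable f volume a b) (hf_nonneg : ∀ s ∈ Ioo a b, 0 ≤ f s) :
    |∫ s in a..b, v s * f s| ≤ D * ∫ s in a..b, f s := by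
  rw [← intervalIntegral.integral_const_mul, ← Real.norm_eq_abs]
  refine intervalIntegral.norm_integral_le_of_norm_le hab
    (ae_mem_Ioc_imp_of_forall_mem_Ioo fun s hs => ?_) (hf.const_mul D)
  rw [norm_mul, Real.norm_of_nonneg (hf_nonneg s hs)]
  exact mul_le_mul_of_nonneg_right (hD s hs) (hf_nonneg s hs)

lemma abs_integral_mul_le_of_integral_eq_zero (hab : a ≤ b) (hv : IntervalIntegrable v volume a b)
    (hD : ∀ s ∈ Ioo a b, |v s| ≤ D) (hv₀ : ∫ s in a..b, v s = 0) (hf : MonotoneOn f (Icc a b)) :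
    |∫ s in a..b, v s * f s| ≤ D * (f b - f a) * (b - a) := by
  have hfi : IntervalIntegrable f volume a b := (uIcc_of_le hab ▸ hf).intervalIntegrable
  have hshift : ∫ s in a..b, v s * f s = ∫ s in a..b, v s * (f s - f a) := by
    simp_rw [mul_sub]
    rw [intervalIntegral.integral_sub (intervalIntegrable_mul_of_abs_le hab hv hD hfi)
      (hv.mul_const _), intervalIntegral.integral_mul_const, hv₀, zero_mul, sub_zero]
  rw [hshift, ← Real.norm_eq_abs, ← abs_of_nonneg (sub_nonneg.2 hab)]
  refine intervalIntegral.norm_integral_le_of_norm_le_const_ae ?_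
  rw [uIoc_of_le hab]
  refine ae_mem_Ioc_imp_of_forall_mem_Ioo fun s hs => ?_
  have hfa : f a ≤ f s := hf (left_mem_Icc.2 hab) (Ioo_subset_Icc_self hs) hs.1.le
  have hfb : f s ≤ f b := hf (Ioo_subset_Icc_self hs) (right_mem_Icc.2 hab) hs.2.le
  rw [norm_mul, Real.norm_of_nonneg (sub_nonneg.2 hfa)]
  exact mul_le_mul (hD s hs) (by linarith) (by linarith) ((abs_nonneg _).trans (hD s hs))

end CellEstimates

section Stability

variable {k e : ℝ → ℝ} {t : ℕ → ℝ} {J n j : ℕ} {D : ℝ}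

/-- `e` is integrable and has oscillation at most `D` on each of the first `J` open cells of the
grid `t`; nothing is asked of `e` at the grid points. -/
structure HasCellOscLE (e : ℝ → ℝ) (t : ℕ → ℝ) (J : ℕ) (D : ℝ) : Prop where
  intervalIntegrable : ∀ j < J, IntervalIntegrable e volume (t j) (t (j + 1))
  abs_sub_le : ∀ j < J, ∀ x ∈ Ioo (t j) (t (j + 1)), ∀ y ∈ Ioo (t j) (t (j + 1)),
    |e x - e y| ≤ D

/-- The mean value of `e` over the `j`-th cell of the grid `t`, i.e. the value there of the best
piecewise constant approximation of `e`. -/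
noncomputable def cellMean (e : ℝ → ℝ) (t : ℕ → ℝ) (j : ℕ) : ℝ :=
  ⨍ s in Ioo (t j) (t (j + 1)), e s

lemma integral_sub_cellMean (ht : StrictMono t) :
    ∫ s in t j..t (j + 1), (e s - cellMean e t j) = 0 := by
  rw [intervalIntegral.integral_of_le (ht j.lt_succ_self).le, integral_Ioc_eq_integral_Ioo]
  exact setAverage_sub_setAverage (by simp) e

namespace HasCellOscLE

lemma nonneg (he : HasCellOscLE e t J D) (ht : StrictMono t) (hj : j < J) : 0 ≤ D := by
  obtain ⟨s, hs⟩ := nonempty_Ioo.2 (ht j.lt_succ_self)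
  exact (abs_nonneg _).trans (he.abs_sub_le j hj s hs s hs)

lemma abs_sub_cellMean_le (he : HasCellOscLE e t J D) (ht : StrictMono t) (hj : j < J) {s : ℝ}
    (hs : s ∈ Ioo (t j) (t (j + 1))) : |e s - cellMean e t j| ≤ D := by
  have hmem : cellMean e t j ∈ Metric.closedBall (e s) D := by
    refine (convex_closedBall (e s) D).set_average_mem Metric.isClosed_closedBall ?_ ?_
      (ae_restrict_of_forall_mem measurableSet_Ioo fun x hx => he.abs_sub_le j hj x hx s hs)
      ((intervalIntegrable_iff_integrableOn_Ioo_of_le (ht j.lt_succ_self).le).1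
        (he.intervalIntegrable j hj))
    · simpa using ht j.lt_succ_self
    · simp
  rwa [Metric.mem_closedBall, dist_comm] at hmem

lemma intervalIntegrable_sub_cellMean (he : HasCellOscLE e t J D) (hj : j < J) :
    IntervalIntegrable (fun s => e s - cellMean e t j) volume (t j) (t (j + 1)) :=
  (he.intervalIntegrable j hj).sub intervalIntegrable_const

lemma intervalIntegrable_sub_cellMean_mul (he : HasCellOscLE e t J D) (ht : StrictMono t)
    (hj : j < J) {f : ℝ → ℝ} (hf : IntervalIntegrable f volume (t j) (t (j + 1))) :
    IntervalIntegrable (fun s => (e s - cellMean e t j) * f s) volume (t j) (t (j + 1)) :=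
  intervalIntegrable_mul_of_abs_le (ht j.lt_succ_self).le (he.intervalIntegrable_sub_cellMean hj)
    (fun _ hs => he.abs_sub_cellMean_le ht hj hs) hf

lemma intervalIntegrable_mul (he : HasCellOscLE e t J D) (ht : StrictMono t)
    (hj : j < J) {f : ℝ → ℝ} (hf : IntervalIntegrable f volume (t j) (t (j + 1))) :
    IntervalIntegrable (fun s => e s * f s) volume (t j) (t (j + 1)) := by
  convert (he.intervalIntegrable_sub_cellMean_mul ht hj hf).add (hf.const_mul (cellMean e t j))
    using 2
  ring

lemma integral_mul_eq (he : HasCellOscLE e t J D) (ht : StrictMono t) (hk : IsLogConvexKernel k)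
    (hn : n < J) (hj : j ≤ n) :
    ∫ s in t j..t (j + 1), e s * k (t (n + 1) - s) = cellWeight k t n j * cellMean e t j +
      ∫ s in t j..t (j + 1), (e s - cellMean e t j) * k (t (n + 1) - s) := by
  have hki : IntervalIntegrable (fun s => k (t (n + 1) - s)) volume (t j) (t (j + 1)) :=
    hk.intervalIntegrable_comp_sub (ht.monotone (by lia)) (ht.monotone (by lia))
  rw [cellWeight, ← intervalIntegral.integral_mul_const, ← intervalIntegral.integral_add
    (hki.mul_const _) (he.intervalIntegrable_sub_cellMean_mul ht (hj.trans_lt hn) hki)]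
  exact intervalIntegral.integral_congr fun s _ => by ring

lemma sum_integral_mul_eq (he : HasCellOscLE e t J D) (ht : StrictMono t)
    (hk : IsLogConvexKernel k) (hn : n < J) :
    ∑ j ∈ Finset.range (n + 1), ∫ s in t j..t (j + 1), e s * k (t (n + 1) - s) =
      ∫ s in t 0..t (n + 1), e s * k (t (n + 1) - s) :=
  intervalIntegral.sum_integral_adjacent_intervals fun j hj =>
    he.intervalIntegrable_mul ht (by lia)
      (hk.intervalIntegrable_comp_sub (ht.monotone (by lia)) (ht.monotone (by lia)))

-- On the past cells the zero mean of `e - cellMean` is played against the variation of the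
-- kernel, which telescopes because the steps are nondecreasing.
lemma abs_sum_integral_past_le (he : HasCellOscLE e t J D) (ht : StrictMono t)
    (hstep : Monotone fun j => t (j + 1) - t j) (hk : IsLogConvexKernel k) (hn : n < J) :
    |∑ j ∈ Finset.range n, ∫ s in t j..t (j + 1), (e s - cellMean e t j) * k (t (n + 1) - s)| ≤
      D * cellWeight k t n n := by
  have hD := he.nonneg ht hn
  have hτ : 0 < t (n + 1) - t n := sub_pos.2 (ht n.lt_succ_self)
  calc |∑ j ∈ Finset.range n, ∫ s in t j..t (j + 1), (e s - cellMean e t j) * k (t (n + 1) - s)|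
    _ ≤ ∑ j ∈ Finset.range n,
          D * (t (n + 1) - t n) * (k (t (n + 1) - t (j + 1)) - k (t (n + 1) - t j)) := by
        refine (Finset.abs_sum_le_sum_abs _ _).trans (Finset.sum_le_sum fun j hj => ?_)
        have hjn : j < n := Finset.mem_range.1 hj
        have hjt : t j < t (j + 1) := ht j.lt_succ_self
        have hmono := hk.monotoneOn_comp_sub (a := t j) (ht (Nat.succ_lt_succ hjn))
        have hcell := abs_integral_mul_le_of_integral_eq_zero hjt.le
          (he.intervalIntegrable_sub_cellMean (hjn.trans hn))
          (fun _ hs => he.abs_sub_cellMean_le ht (hjn.trans hn) hs)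
          (integral_sub_cellMean ht) hmono
        have hvar := hmono (left_mem_Icc.2 hjt.le) (right_mem_Icc.2 hjt.le) hjt.le
        refine hcell.trans ((mul_le_mul_of_nonneg_left (hstep hjn.le)
          (mul_nonneg hD (sub_nonneg.2 hvar))).trans_eq (by ring))
    _ = D * ((t (n + 1) - t n) * (k (t (n + 1) - t n) - k (t (n + 1) - t 0))) := by
        rw [← Finset.mul_sum, Finset.sum_range_sub fun j => k (t (n + 1) - t j), mul_assoc]
    _ ≤ D * ((t (n + 1) - t n) * k (t (n + 1) - t n)) := by
        have hk₀ := hk.pos (sub_pos.2 (ht n.succ_pos))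
        gcongr
        linarith
    _ ≤ D * cellWeight k t n n := by
        rw [cellWeight_self]
        exact mul_le_mul_of_nonneg_left (hk.mul_le_integral hτ) hD

lemma abs_sum_cellWeight_mul_cellMean_le (he : HasCellOscLE e t J D) (ht : StrictMono t)
    (hstep : Monotone fun j => t (j + 1) - t j) (hk : IsLogConvexKernel k) (hn : n < J)
    (hconv : ∫ s in t 0..t (n + 1), e s * k (t (n + 1) - s) = 0) :
    |∑ j ∈ Finset.range (n + 1), cellWeight k t n j * cellMean e t j| ≤
      2 * D * cellWeight k t n n := by
  have hlt : t n < t (n + 1) := ht n.lt_succ_self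
  have hpast := he.abs_sum_integral_past_le ht hstep hk hn
  have hlast : |∫ s in t n..t (n + 1), (e s - cellMean e t n) * k (t (n + 1) - s)| ≤
      D * cellWeight k t n n :=
    abs_integral_mul_le_mul_integral hlt.le (fun _ hs => he.abs_sub_cellMean_le ht hn hs)
      (hk.intervalIntegrable_comp_sub hlt.le le_rfl)
      fun s hs => (hk.pos (sub_pos.2 hs.2)).le
  rw [← he.sum_integral_mul_eq ht hk hn, Finset.sum_congr rfl fun j hj =>
    he.integral_mul_eq ht hk hn (Finset.mem_range_succ_iff.1 hj), Finset.sum_add_distrib,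
    Finset.sum_range_succ (fun j => ∫ s in t j..t (j + 1), _)] at hconv
  rw [abs_le] at *
  constructor <;> linarith

theorem abs_le_five_mul_of_integral_mul_eq_zero (he : HasCellOscLE e t J D) (ht : StrictMono t)
    (hstep : Monotone fun j => t (j + 1) - t j) (hk : IsLogConvexKernel k)
    (hconv : ∀ n ≤ J, ∫ s in t 0..t n, e s * k (t n - s) = 0) (hj : j < J) {s : ℝ}
    (hs : s ∈ Ioo (t j) (t (j + 1))) : |e s| ≤ 5 * D := by
  have hD := he.nonneg ht hj
  have hdiag : ∀ i ≤ j, cellWeight k t i i ≤ cellWeight k t j j := fun i hi => by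
    simp only [cellWeight_self]
    exact hk.integral_mono (sub_nonneg.2 (ht i.lt_succ_self).le) (hstep hi)
  have hmean : cellWeight k t j j * |cellMean e t j| ≤ 2 * (2 * D * cellWeight k t j j) :=
    mul_abs_le_two_mul_of_ratioAntitone (fun _ _ => cellWeight_pos hk ht)
      (ratioAntitone_cellWeight hk ht) (fun n => cellWeight_succ_le hk ht n.zero_le)
      fun i hi => (he.abs_sum_cellWeight_mul_cellMean_le ht hstep hk (by lia)
        (hconv (i + 1) (by lia))).trans (mul_le_mul_of_nonneg_left (hdiag i hi) (by positivity))
  have hmean' : |cellMean e t j| ≤ 4 * D :=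
    le_of_mul_le_mul_left (by linarith) (cellWeight_pos hk ht le_rfl)
  have hosc := he.abs_sub_cellMean_le ht hj hs
  rw [abs_le] at *
  constructor <;> linarith

end HasCellOscLE

end Stability

section Galerkin

variable {k e : ℝ → ℝ} {t : ℕ → ℝ} {J n : ℕ} {D : ℝ}

lemma pp_eq_indicator (β : ℝ) : pp β = (Ioi 0).indicator fun x => x ^ β := by
  ext x
  simp [pp, indicator]

lemma mul_indicator_comp_sub_eq (e k : ℝ → ℝ) (b : ℝ) :
    (fun s => e s * (Ioi 0).indicator k (b - s)) = (Iio b).indicator fun s => e s * k (b - s) := by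
  ext s
  simp [indicator]

lemma integral_mul_indicator_comp_sub {a b c : ℝ} (hab : a ≤ b) (hbc : b ≤ c) :
    ∫ s in a..c, e s * (Ioi 0).indicator k (b - s) = ∫ s in a..b, e s * k (b - s) := by
  rw [mul_indicator_comp_sub_eq, intervalIntegral.integral_of_le (hab.trans hbc),
    intervalIntegral.integral_of_le hab, setIntegral_indicator measurableSet_Iio,
    integral_Ioc_eq_integral_Ioo]
  congr 2
  ext s
  exact ⟨fun hs => ⟨hs.1.1, hs.2⟩, fun hs => ⟨⟨hs.1, hs.2.le.trans hbc⟩, hs.2⟩⟩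

lemma intervalIntegrable_mul_indicator_comp_sub {a b c : ℝ} (hab : a ≤ b) (hbc : b ≤ c)
    (h : IntervalIntegrable (fun s => e s * k (b - s)) volume a b) :
    IntervalIntegrable (fun s => e s * (Ioi 0).indicator k (b - s)) volume a c := by
  rw [mul_indicator_comp_sub_eq, intervalIntegrable_iff_integrableOn_Ioc_of_le (hab.trans hbc),
    integrableOn_indicator_iff measurableSet_Iio]
  rw [intervalIntegrable_iff_integrableOn_Ioc_of_le hab] at h
  exact h.mono_set fun s hs => ⟨hs.2.1, (mem_Iio.1 hs.1).le⟩

namespace HasCellOscLE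

lemma intervalIntegrable_zero (he : HasCellOscLE e t J D) (hn : n ≤ J) :
    IntervalIntegrable e volume (t 0) (t n) :=
  .trans_iterate fun j hj => he.intervalIntegrable j (by lia)

lemma intervalIntegrable_mul_comp_sub (he : HasCellOscLE e t J D) (ht : StrictMono t)
    (hk : IsLogConvexKernel k) (hn : n ≤ J) :
    IntervalIntegrable (fun s => e s * k (t n - s)) volume (t 0) (t n) :=
  .trans_iterate fun j hj => he.intervalIntegrable_mul ht (by lia)
    (hk.intervalIntegrable_comp_sub (ht.monotone (by lia)) (ht.monotone (by lia)))

lemma integral_mul_sub_indicator_eq_sub (he : HasCellOscLE e t J D) (ht : StrictMono t)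
    (hk : IsLogConvexKernel k) (hn : n < J) :
    ∫ s in Ioo (t 0) (t (n + 1)), e s * (k (t (n + 1) - s) - (Ioi 0).indicator k (t n - s)) =
      (∫ s in t 0..t (n + 1), e s * k (t (n + 1) - s)) - ∫ s in t 0..t n, e s * k (t n - s) := by
  have h₀ : t 0 ≤ t n := ht.monotone n.zero_le
  have h₁ : t n ≤ t (n + 1) := ht.monotone n.le_succ
  rw [← integral_mul_indicator_comp_sub h₀ h₁, ← intervalIntegral.integral_sub
      (he.intervalIntegrable_mul_comp_sub ht hk hn) (intervalIntegrable_mul_indicator_comp_sub h₀ h₁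
      (he.intervalIntegrable_mul_comp_sub ht hk hn.le)),
    intervalIntegral.integral_of_le (h₀.trans h₁), integral_Ioc_eq_integral_Ioo]
  simp_rw [mul_sub]

lemma integral_mul_add_eq_zero_of_galerkin (he : HasCellOscLE e t J D) (ht : StrictMono t)
    (hk : IsLogConvexKernel k) {L : ℝ}
    (hgal : ∀ n < J,
      (∫ s in Ioo (t 0) (t (n + 1)),
        e s * (k (t (n + 1) - s) - (Ioi 0).indicator k (t n - s))) +
      L * ∫ s in Ioo (t n) (t (n + 1)), e s = 0) (hn : n ≤ J) :
    ∫ s in t 0..t n, e s * (k (t n - s) + L) = 0 := by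
  have hsplit : ∀ n ≤ J, ∫ s in t 0..t n, e s * (k (t n - s) + L) =
      (∫ s in t 0..t n, e s * k (t n - s)) + L * ∫ s in t 0..t n, e s := fun n hn => by
    rw [← intervalIntegral.integral_const_mul, ← intervalIntegral.integral_add
      (he.intervalIntegrable_mul_comp_sub ht hk hn) ((he.intervalIntegrable_zero hn).const_mul L)]
    simp only [mul_add, mul_comm L]
  induction n with
  | zero => simp
  | succ n ih =>
    have hstep := hgal n hn
    rw [he.integral_mul_sub_indicator_eq_sub ht hk hn, ← integral_Ioc_eq_integral_Ioo,
      ← intervalIntegral.integral_of_le (ht n.lt_succ_self).le] at hstep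
    have hadj := intervalIntegral.integral_add_adjacent_intervals
      (he.intervalIntegrable_zero (Nat.le_of_succ_le hn)) (he.intervalIntegrable n hn)
    have ih := ih (Nat.le_of_succ_le hn)
    rw [hsplit n (by lia)] at ih
    rw [hsplit (n + 1) hn, ← hadj]
    linarith

lemma sub_of_forall_eq {y P : ℝ → ℝ} (hy : HasCellOscLE y t J D) (ht : StrictMono t)
    (hP : ∀ j < J, ∀ x ∈ Ioo (t j) (t (j + 1)), ∀ z ∈ Ioo (t j) (t (j + 1)), P x = P z) :
    HasCellOscLE (fun s => y s - P s) t J D where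
  intervalIntegrable j hj := by
    have hlt := ht j.lt_succ_self
    obtain ⟨z, hz⟩ := nonempty_Ioo.2 hlt
    refine ((hy.intervalIntegrable j hj).sub (intervalIntegrable_const (c := P z))).congr_uIoo ?_
    rw [uIoo_of_le hlt.le]
    exact fun s hs => congrArg (y s - ·) (hP j hj z hz s hs)
  abs_sub_le j hj x hx z hz := by
    rw [hP j hj x hx z hz, sub_sub_sub_cancel_right]
    exact hy.abs_sub_le j hj x hx z hz

end HasCellOscLE

end Galerkin

section GradedGrid

variable {T σ r : ℝ} {J j : ℕ}

lemma tg_zero (hσ : σ ≠ 0) : tg T σ J 0 = 0 := by simp [tg, Real.zero_rpow hσ]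

lemma tg_self (hJ : J ≠ 0) : tg T σ J J = T := by simp [tg, hJ]

lemma tg_strictMono (hT : 0 < T) (hσ : 0 < σ) (hJ : 0 < J) : StrictMono (tg T σ J) := by
  intro i j hij
  have : (0 : ℝ) < J := Nat.cast_pos.2 hJ
  have hij' : (i : ℝ) < j := Nat.cast_lt.2 hij
  simp only [tg]
  gcongr

lemma tg_step_monotone (hT : 0 ≤ T) (hσ : 1 ≤ σ) :
    Monotone fun j => tg T σ J (j + 1) - tg T σ J j := by
  refine monotone_nat_of_le_succ fun j => ?_
  have hslope : ((j : ℝ) + 1) ^ σ - (j : ℝ) ^ σ ≤ ((j : ℝ) + 1 + 1) ^ σ - ((j : ℝ) + 1) ^ σ := by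
    simpa using (convexOn_rpow hσ).slope_mono_adjacent (x := (j : ℝ)) (y := (j : ℝ) + 1)
      (z := (j : ℝ) + 1 + 1) (mem_Ici.2 (by positivity)) (mem_Ici.2 (by positivity))
      (lt_add_one _) (lt_add_one _)
  have hscale : ∀ i : ℕ, tg T σ J i = (i : ℝ) ^ σ * (T / (J : ℝ) ^ σ) := fun i => by
    rw [tg, Real.div_rpow i.cast_nonneg J.cast_nonneg]
    ring
  simp only [hscale, ← sub_mul]
  push_cast
  exact mul_le_mul_of_nonneg_right hslope (by positivity)

lemma add_one_rpow_sub_rpow_le_mul {β x : ℝ} (hβ : 1 ≤ β) (hx : 0 ≤ x) :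
    (x + 1) ^ β - x ^ β ≤ β * (x + 1) ^ (β - 1) := by
  have h := (convexOn_rpow hβ).slope_le_of_hasDerivAt (x := x) (y := x + 1) hx
    (mem_Ici.2 (by positivity)) (by linarith) (Real.hasDerivAt_rpow_const (.inr hβ))
  simpa [slope_def_field] using h

lemma add_one_rpow_sub_rpow_le {β x y : ℝ} (hβ : 0 ≤ β) (hx : 0 ≤ x) (hxy : x + 1 ≤ y) :
    (x + 1) ^ β - x ^ β ≤ max 1 β * y ^ (β - min β 1) := by
  rcases le_total β 1 with hβ1 | hβ1
  · have h := Real.rpow_add_le_add_rpow hx zero_le_one hβ hβ1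
    rw [Real.one_rpow] at h
    simpa [hβ1, add_comm] using h
  · rw [min_eq_right hβ1, max_eq_right hβ1]
    refine (add_one_rpow_sub_rpow_le_mul hβ1 hx).trans ?_
    gcongr

lemma tg_rpow_succ_sub_rpow_le {γ : ℝ} (hT : 0 ≤ T) (hσ : 0 ≤ σ) (hγ : 0 ≤ γ) (hj : j < J) :
    tg T σ J (j + 1) ^ γ - tg T σ J j ^ γ ≤
      T ^ γ * max 1 (σ * γ) * (J : ℝ) ^ (-min (σ * γ) 1) := by
  have hJ : (0 : ℝ) < J := Nat.cast_pos.2 (by lia)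
  have hscale : ∀ i : ℕ, tg T σ J i ^ γ = T ^ γ * (J : ℝ) ^ (-(σ * γ)) * (i : ℝ) ^ (σ * γ) :=
    fun i => by
      rw [tg, Real.mul_rpow (by positivity) hT, ← Real.rpow_mul (by positivity),
        Real.div_rpow i.cast_nonneg hJ.le, Real.rpow_neg hJ.le]
      ring
  calc tg T σ J (j + 1) ^ γ - tg T σ J j ^ γ
    _ = T ^ γ * (J : ℝ) ^ (-(σ * γ)) * (((j : ℝ) + 1) ^ (σ * γ) - (j : ℝ) ^ (σ * γ)) := by
        rw [hscale, hscale, ← mul_sub]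
        push_cast
        rfl
    _ ≤ T ^ γ * (J : ℝ) ^ (-(σ * γ)) * (max 1 (σ * γ) * (J : ℝ) ^ (σ * γ - min (σ * γ) 1)) := by
        gcongr
        exact add_one_rpow_sub_rpow_le (by positivity) j.cast_nonneg (by exact_mod_cast hj)
    _ = T ^ γ * max 1 (σ * γ) * (J : ℝ) ^ (-min (σ * γ) 1) := by
        rw [sub_eq_add_neg, Real.rpow_add hJ, Real.rpow_neg hJ.le (σ * γ)]
        field_simp

variable {y y' : ℝ → ℝ}

lemma abs_sub_le_of_abs_deriv_le_rpow_neg {a b : ℝ} (hr : r < 1) (hab : a ≤ b)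
    (hy : ContinuousOn y (Icc a b)) (hderiv : ∀ s ∈ Ioo a b, HasDerivAt y (y' s) s)
    (hbound : ∀ s ∈ Ioo a b, |y' s| ≤ s ^ (-r)) :
    |y b - y a| ≤ (b ^ (1 - r) - a ^ (1 - r)) / (1 - r) := by
  have h := norm_sub_le_integral_of_norm_deriv_le_of_le hab hy
    (fun s hs => (hderiv s hs).differentiableAt.differentiableWithinAt)
    (.of_forall fun s hs => (hderiv s hs).deriv.symm ▸ hbound s hs)
    (intervalIntegral.intervalIntegrable_rpow' (by linarith))
  rwa [integral_rpow (.inl (by linarith)), neg_add_eq_sub] at h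

lemma abs_sub_le_of_mem_Icc_of_abs_deriv_le_rpow_neg {a b : ℝ} (hr : r < 1) (ha : 0 ≤ a)
    (hy : ContinuousOn y (Icc a b)) (hderiv : ∀ s ∈ Ioo a b, HasDerivAt y (y' s) s)
    (hbound : ∀ s ∈ Ioo a b, |y' s| ≤ s ^ (-r)) {x z : ℝ} (hx : x ∈ Icc a b) (hz : z ∈ Icc a b) :
    |y x - y z| ≤ (b ^ (1 - r) - a ^ (1 - r)) / (1 - r) := by
  wlog hzx : z ≤ x generalizing x z
  · rw [abs_sub_comm]
    exact this hz hx (le_of_not_ge hzx)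
  have hsub : Ioo z x ⊆ Ioo a b := Ioo_subset_Ioo hz.1 hx.2
  have : 0 < 1 - r := sub_pos.2 hr
  refine (abs_sub_le_of_abs_deriv_le_rpow_neg hr hzx (hy.mono (Icc_subset_Icc hz.1 hx.2))
    (fun s hs => hderiv s (hsub hs)) fun s hs => hbound s (hsub hs)).trans ?_
  have hx₀ : 0 ≤ x := ha.trans hx.1
  gcongr
  · exact hx.2
  · exact hz.1

lemma hasCellOscLE_tg (hT : 0 < T) (hσ : 0 < σ) (hr : r < 1) (hJ : 0 < J)
    (hy : ContinuousOn y (Icc 0 T)) (hderiv : ∀ s ∈ Ioo 0 T, HasDerivAt y (y' s) s)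
    (hbound : ∀ s ∈ Ioo 0 T, |y' s| ≤ s ^ (-r)) :
    HasCellOscLE y (tg T σ J) J
      (T ^ (1 - r) * max 1 (σ * (1 - r)) / (1 - r) * (J : ℝ) ^ (-min (σ * (1 - r)) 1)) := by
  have hr' : 0 < 1 - r := sub_pos.2 hr
  have hmono := (tg_strictMono hT hσ hJ).monotone
  have hnonneg : ∀ j, 0 ≤ tg T σ J j := fun j => by
    simpa only [tg_zero hσ.ne'] using hmono j.zero_le
  have hle : ∀ j < J, tg T σ J (j + 1) ≤ T := fun j hj => by
    simpa only [tg_self hJ.ne'] using hmono hj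
  have hcell : ∀ j < J, ContinuousOn y (Icc (tg T σ J j) (tg T σ J (j + 1))) := fun j hj =>
    hy.mono (Icc_subset_Icc (hnonneg j) (hle j hj))
  refine ⟨fun j hj => (hcell j hj).intervalIntegrable_of_Icc (hmono j.le_succ), ?_⟩
  intro j hj x hx z hz
  have hsub := Ioo_subset_Ioo (hnonneg j) (hle j hj)
  calc |y x - y z|
    _ ≤ (tg T σ J (j + 1) ^ (1 - r) - tg T σ J j ^ (1 - r)) / (1 - r) :=
        abs_sub_le_of_mem_Icc_of_abs_deriv_le_rpow_neg hr (hnonneg j) (hcell j hj)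
          (fun s hs => hderiv s (hsub hs)) (fun s hs => hbound s (hsub hs))
          (Ioo_subset_Icc_self hx) (Ioo_subset_Icc_self hz)
    _ ≤ T ^ (1 - r) * max 1 (σ * (1 - r)) * (J : ℝ) ^ (-min (σ * (1 - r)) 1) / (1 - r) := by
        gcongr
        exact tg_rpow_succ_sub_rpow_le hT.le hσ.le hr'.le hj
    _ = _ := by ring

end GradedGrid

theorem stmt6_general {T σ α r lam : ℝ} {J : ℕ} (hT : 0 < T) (hσ : 1 ≤ σ) (hα0 : 0 ≤ α)
    (hα1 : α < 1) (hr : r < 1) (hlam : 0 ≤ lam) {y y' P : ℝ → ℝ}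
    (hy : ContinuousOn y (Icc 0 T)) (hderiv : ∀ s ∈ Ioo 0 T, HasDerivAt y (y' s) s)
    (hbound : ∀ s ∈ Ioo 0 T, |y' s| ≤ s ^ (-r))
    (hP : ∀ j < J, ∀ x ∈ Ioo (tg T σ J j) (tg T σ J (j + 1)),
      ∀ z ∈ Ioo (tg T σ J j) (tg T σ J (j + 1)), P x = P z)
    (hgal : ∀ n < J,
      (Real.Gamma (1 - α))⁻¹ *
          (∫ s in Ioo 0 (tg T σ J (n + 1)),
            (y s - P s) * ((tg T σ J (n + 1) - s) ^ (-α) - pp (-α) (tg T σ J n - s))) +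
        lam * ∫ s in Ioo (tg T σ J n) (tg T σ J (n + 1)), (y s - P s) = 0)
    {j : ℕ} (hj : j < J) {s : ℝ} (hs : s ∈ Ioo (tg T σ J j) (tg T σ J (j + 1))) :
    |y s - P s| ≤ 5 * (T ^ (1 - r) * max 1 (σ * (1 - r)) / (1 - r)) *
      (J : ℝ) ^ (-min (σ * (1 - r)) 1) := by
  have hJ : 0 < J := by lia
  have hσ' : 0 < σ := by linarith
  have hΓ : 0 < Real.Gamma (1 - α) := Real.Gamma_pos_of_pos (by linarith)
  have ht : StrictMono (tg T σ J) := tg_strictMono hT hσ' hJ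
  have hk : IsLogConvexKernel fun x => x ^ (-α) := isLogConvexKernel_rpow_neg hα0 hα1
  have he := (hasCellOscLE_tg hT hσ' hr hJ hy hderiv hbound).sub_of_forall_eq ht hP
  rw [mul_assoc]
  refine he.abs_le_five_mul_of_integral_mul_eq_zero ht (tg_step_monotone hT.le hσ)
    (hk.add_const (L := lam * Real.Gamma (1 - α)) (by positivity)) (fun n hn => ?_) hj hs
  refine he.integral_mul_add_eq_zero_of_galerkin ht hk (fun n hn => ?_) hn
  have h := hgal n hn
  rw [← pp_eq_indicator, tg_zero hσ'.ne']
  field_simp at h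
  linarith

/-- Lemma 3.5 (lem:err-Pi): let `0 < α < 1`, `0 < r < 1`.  There is a constant
`C = C(α,σ,r,T) > 0`, independent of `λ` and `J`, such that whenever
`y ∈ C([0,T]) ∩ C¹((0,T])` satisfies `|y′(t)| ≤ t^{−r}` on `(0,T]` and `Π` is a
piecewise-constant function on the graded grid satisfying the Galerkin equations of the
scheme, then `‖y − Π‖_{L^∞(0,T)} ≤ C J^{−min{σ(1−r),1}}` (stated pointwise on the open
grid intervals). -/
theorem stmt6 (T σ α r : ℝ) (hT : 0 < T) (hσ : 1 ≤ σ) (hα0 : 0 < α) (hα1 : α < 1)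
    (hr0 : 0 < r) (hr1 : r < 1) :
    ∃ C : ℝ, 0 < C ∧ ∀ J : ℕ, 0 < J → ∀ lam : ℝ, 0 < lam → ∀ y y' : ℝ → ℝ,
      ContinuousOn y (Set.Icc 0 T) →
      (∀ s ∈ Set.Ioc (0 : ℝ) T, HasDerivWithinAt y (y' s) (Set.Ioc 0 T) s) →
      ContinuousOn y' (Set.Ioc 0 T) →
      (∀ s ∈ Set.Ioc (0 : ℝ) T, |y' s| ≤ s ^ (-r)) →
      ∀ Pi : ℝ → ℝ,
      (∀ j : ℕ, 1 ≤ j → j ≤ J →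
        ∀ s₁ ∈ Set.Ioo (tg T σ J (j - 1)) (tg T σ J j),
        ∀ s₂ ∈ Set.Ioo (tg T σ J (j - 1)) (tg T σ J j), Pi s₁ = Pi s₂) →
      (∀ k : ℕ, 1 ≤ k → k ≤ J →
        (Real.Gamma (1 - α))⁻¹ *
            (∫ s in Set.Ioo 0 (tg T σ J k),
              (y s - Pi s) * ((tg T σ J k - s) ^ (-α) - pp (-α) (tg T σ J (k - 1) - s))) +
          lam * ∫ s in Set.Ioo (tg T σ J (k - 1)) (tg T σ J k), (y s - Pi s) = 0) →
      ∀ j : ℕ, 1 ≤ j → j ≤ J → ∀ s ∈ Set.Ioo (tg T σ J (j - 1)) (tg T σ J j),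
        |y s - Pi s| ≤ C * (J : ℝ) ^ (-min (σ * (1 - r)) 1) := by
  have : 0 < 1 - r := sub_pos.2 hr1
  refine ⟨5 * (T ^ (1 - r) * max 1 (σ * (1 - r)) / (1 - r)), by positivity,
    fun J _ lam hlam y y' hy hderiv _ hbound Pi hPi hgal j hj hjJ s hs => ?_⟩
  obtain ⟨i, rfl⟩ := Nat.exists_eq_add_of_le' hj
  exact stmt6_general hT hσ hα0.le hα1 hr1 hlam.le hy
    (fun s hs => (hderiv s (Ioo_subset_Ioc_self hs)).hasDerivAt (Ioc_mem_nhds hs.1 hs.2))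
    (fun s hs => hbound s (Ioo_subset_Ioc_self hs)) (fun j hj => hPi (j + 1) j.succ_pos hj)
    (fun n hn => hgal (n + 1) n.succ_pos hn) hjJ hs
end

section
/- For any 0<β<1 and any real numbers 0 ≤ t < a < b < c < d: ((d−t)^{1−β} − (d−a)^{1−β}) / ((d−a)^{1−β} − (d−b)^{1−β}) > ((c−t)^{1−β} − (c−a)^{1−β}) / ((c−a)^{1−β} − (c−b)^{1−β}). -/
/-!
Up to the common factor `1 - β`, each difference of powers is the integral over `[t, a]` or `[a, b]`
of the kernel `s ↦ (e - s) ^ (-β)` with `e = c` or `e = d`. The quotient of the two kernels,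
`s ↦ ((c - s) / (d - s)) ^ β`, is strictly decreasing, so by Cauchy's mean value theorem passing
from `c` to `d` shrinks the integral over `[a, b]` by a larger factor than the one over `[t, a]`.
-/

open Set

section MeanValue

variable {f f' g g' : ℝ → ℝ} {x y z : ℝ}

theorem exists_hasDerivAt_div_eq_sub_div_sub (hxy : x < y)
    (hfc : ContinuousOn f (Icc x y)) (hf : ∀ s ∈ Ioo x y, HasDerivAt f (f' s) s)
    (hgc : ContinuousOn g (Icc x y)) (hg : ∀ s ∈ Ioo x y, HasDerivAt g (g' s) s)
    (hg' : ∀ s ∈ Ioo x y, g' s ≠ 0) :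
    ∃ ξ ∈ Ioo x y, f' ξ / g' ξ = (f y - f x) / (g y - g x) := by
  have hgxy : g y - g x ≠ 0 := by
    obtain ⟨η, hη, hslope⟩ := exists_hasDerivAt_eq_slope g g' hxy hgc hg
    exact (div_ne_zero_iff.mp (hslope ▸ hg' η hη)).1
  obtain ⟨ξ, hξ, hratio⟩ := exists_ratio_hasDerivAt_eq_ratio_slope f f' hxy hfc hf g g' hgc hg
  exact ⟨ξ, hξ, (div_eq_div_iff (hg' ξ hξ) hgxy).mpr (by linarith)⟩

theorem right_sub_div_sub_lt_left_of_strictAntiOn_deriv_div (hxy : x < y) (hyz : y < z)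
    (hfc : ContinuousOn f (Icc x z)) (hf : ∀ s ∈ Ioo x z, HasDerivAt f (f' s) s)
    (hgc : ContinuousOn g (Icc x z)) (hg : ∀ s ∈ Ioo x z, HasDerivAt g (g' s) s)
    (hg' : ∀ s ∈ Ioo x z, g' s ≠ 0) (hanti : StrictAntiOn (fun s ↦ f' s / g' s) (Ioo x z)) :
    (f z - f y) / (g z - g y) < (f y - f x) / (g y - g x) := by
  have hIccl : Icc x y ⊆ Icc x z := Icc_subset_Icc_right hyz.le
  have hIccr : Icc y z ⊆ Icc x z := Icc_subset_Icc_left hxy.le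
  have hIool : Ioo x y ⊆ Ioo x z := Ioo_subset_Ioo_right hyz.le
  have hIoor : Ioo y z ⊆ Ioo x z := Ioo_subset_Ioo_left hxy.le
  obtain ⟨ξ, hξ, hξ_eq⟩ := exists_hasDerivAt_div_eq_sub_div_sub hxy
    (hfc.mono hIccl) (fun s hs ↦ hf s (hIool hs))
    (hgc.mono hIccl) (fun s hs ↦ hg s (hIool hs)) (fun s hs ↦ hg' s (hIool hs))
  obtain ⟨η, hη, hη_eq⟩ := exists_hasDerivAt_div_eq_sub_div_sub hyz
    (hfc.mono hIccr) (fun s hs ↦ hf s (hIoor hs))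
    (hgc.mono hIccr) (fun s hs ↦ hg s (hIoor hs)) (fun s hs ↦ hg' s (hIoor hs))
  rw [← hξ_eq, ← hη_eq]
  exact hanti (hIool hξ) (hIoor hη) (hξ.2.trans hη.1)

theorem strictMonoOn_Icc_of_hasDerivAt_pos
    (hfc : ContinuousOn f (Icc x y)) (hf : ∀ s ∈ Ioo x y, HasDerivAt f (f' s) s)
    (hf' : ∀ s ∈ Ioo x y, 0 < f' s) : StrictMonoOn f (Icc x y) := by
  refine strictMonoOn_of_hasDerivWithinAt_pos (f' := f') (convex_Icc x y) hfc ?_ ?_ <;>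
    rw [interior_Icc]
  · exact fun s hs ↦ (hf s hs).hasDerivWithinAt
  · exact hf'

theorem left_sub_div_right_sub_lt_of_strictAntiOn_deriv_div (hxy : x < y) (hyz : y < z)
    (hfc : ContinuousOn f (Icc x z)) (hf : ∀ s ∈ Ioo x z, HasDerivAt f (f' s) s)
    (hf' : ∀ s ∈ Ioo x z, 0 < f' s)
    (hgc : ContinuousOn g (Icc x z)) (hg : ∀ s ∈ Ioo x z, HasDerivAt g (g' s) s)
    (hg' : ∀ s ∈ Ioo x z, 0 < g' s) (hanti : StrictAntiOn (fun s ↦ f' s / g' s) (Ioo x z)) :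
    (g y - g x) / (g z - g y) < (f y - f x) / (f z - f y) := by
  have hx : x ∈ Icc x z := left_mem_Icc.mpr (hxy.trans hyz).le
  have hy : y ∈ Icc x z := ⟨hxy.le, hyz.le⟩
  have hz : z ∈ Icc x z := right_mem_Icc.mpr (hxy.trans hyz).le
  have hf_mono := strictMonoOn_Icc_of_hasDerivAt_pos hfc hf hf'
  have hg_mono := strictMonoOn_Icc_of_hasDerivAt_pos hgc hg hg'
  have hfyz : 0 < f z - f y := sub_pos.mpr (hf_mono hy hz hyz)
  have hgxy : 0 < g y - g x := sub_pos.mpr (hg_mono hx hy hxy)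
  have hgyz : 0 < g z - g y := sub_pos.mpr (hg_mono hy hz hyz)
  have hlt := right_sub_div_sub_lt_left_of_strictAntiOn_deriv_div hxy hyz hfc hf hgc hg
    (fun s hs ↦ (hg' s hs).ne') hanti
  rw [div_lt_div_iff₀ hgyz hgxy] at hlt
  rw [div_lt_div_iff₀ hgyz hfyz]
  linarith

end MeanValue

section PowerKernel

variable {β c d e s : ℝ}

/-- A primitive, in the variable `s < e`, of the power kernel `(e - s) ^ (-β)` for `β ≠ 1`.
The division by `1 - β` makes it increasing on both sides of the exponent `β = 1`. -/
noncomputable def powerKernelPrimitive (β e s : ℝ) : ℝ :=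
  -(e - s) ^ (1 - β) / (1 - β)

theorem hasDerivAt_powerKernelPrimitive (hβ : β ≠ 1) (hs : s < e) :
    HasDerivAt (powerKernelPrimitive β e) ((e - s) ^ (-β)) s := by
  have hβ' : 1 - β ≠ 0 := sub_ne_zero.mpr hβ.symm
  have hpow := ((hasDerivAt_id' s).const_sub e).rpow_const (p := 1 - β)
    (Or.inl (sub_pos.mpr hs).ne')
  refine (hpow.neg.div_const (1 - β)).congr_deriv ?_
  rw [show 1 - β - 1 = -β by ring]
  field_simp

theorem continuousOn_powerKernelPrimitive (hβ : β ≠ 1) :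
    ContinuousOn (powerKernelPrimitive β e) (Iio e) :=
  fun _ hs ↦ (hasDerivAt_powerKernelPrimitive hβ hs).continuousAt.continuousWithinAt

theorem powerKernelPrimitive_sub_div_sub (hβ : β ≠ 1) (e x y z : ℝ) :
    (powerKernelPrimitive β e y - powerKernelPrimitive β e x) /
        (powerKernelPrimitive β e z - powerKernelPrimitive β e y) =
      ((e - x) ^ (1 - β) - (e - y) ^ (1 - β)) / ((e - y) ^ (1 - β) - (e - z) ^ (1 - β)) := by
  simp only [powerKernelPrimitive, ← sub_div, neg_sub_neg]
  exact div_div_div_cancel_right₀ (sub_ne_zero.mpr hβ.symm) _ _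

theorem strictAntiOn_sub_div_sub (hcd : c < d) :
    StrictAntiOn (fun s ↦ (c - s) / (d - s)) (Iio d) := by
  intro u hu v hv huv
  refine (div_lt_div_iff₀ (sub_pos.mpr hv) (sub_pos.mpr hu)).mpr ?_
  linarith [mul_pos (sub_pos.mpr huv) (sub_pos.mpr hcd)]

theorem strictAntiOn_sub_rpow_neg_div_sub_rpow_neg (hβ : 0 < β) (hcd : c < d) :
    StrictAntiOn (fun s ↦ (d - s) ^ (-β) / (c - s) ^ (-β)) (Iio c) := by
  have hkernel : EqOn (fun s ↦ ((c - s) / (d - s)) ^ β)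
      (fun s ↦ (d - s) ^ (-β) / (c - s) ^ (-β)) (Iio c) := by
    intro s hs
    have hcs : 0 ≤ c - s := (sub_pos.mpr hs).le
    have hds : 0 ≤ d - s := (sub_pos.mpr (hs.trans hcd)).le
    simp only [Real.div_rpow hcs hds, Real.rpow_neg hcs, Real.rpow_neg hds, inv_div_inv]
  refine StrictAntiOn.congr (fun u hu v hv huv ↦ ?_) hkernel
  have hratio_nonneg : 0 ≤ (c - v) / (d - v) :=
    (div_pos (sub_pos.mpr hv) (sub_pos.mpr (hv.trans hcd))).le
  exact Real.rpow_lt_rpow hratio_nonneg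
    (strictAntiOn_sub_div_sub hcd (hu.trans hcd) (hv.trans hcd) huv) hβ

end PowerKernel

theorem stmt15_general {β t a b c d : ℝ} (hβ0 : 0 < β) (hβ1 : β ≠ 1)
    (hta : t < a) (hab : a < b) (hbc : b < c) (hcd : c < d) :
    ((c - t) ^ (1 - β) - (c - a) ^ (1 - β)) / ((c - a) ^ (1 - β) - (c - b) ^ (1 - β)) <
      ((d - t) ^ (1 - β) - (d - a) ^ (1 - β)) / ((d - a) ^ (1 - β) - (d - b) ^ (1 - β)) := by
  have hcont {e : ℝ} (he : b < e) : ContinuousOn (powerKernelPrimitive β e) (Icc t b) :=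
    (continuousOn_powerKernelPrimitive hβ1).mono fun _ hs ↦ hs.2.trans_lt he
  have hderiv {e : ℝ} (he : b < e) (s : ℝ) (hs : s ∈ Ioo t b) :
      HasDerivAt (powerKernelPrimitive β e) ((e - s) ^ (-β)) s :=
    hasDerivAt_powerKernelPrimitive hβ1 (hs.2.trans he)
  have hpos {e : ℝ} (he : b < e) (s : ℝ) (hs : s ∈ Ioo t b) : 0 < (e - s) ^ (-β) :=
    Real.rpow_pos_of_pos (sub_pos.mpr (hs.2.trans he)) _
  have hbd : b < d := hbc.trans hcd
  have hanti := (strictAntiOn_sub_rpow_neg_div_sub_rpow_neg hβ0 hcd).mono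
    fun s (hs : s ∈ Ioo t b) ↦ hs.2.trans hbc
  rw [← powerKernelPrimitive_sub_div_sub hβ1, ← powerKernelPrimitive_sub_div_sub hβ1]
  exact left_sub_div_right_sub_lt_of_strictAntiOn_deriv_div hta hab
    (hcont hbd) (hderiv hbd) (hpos hbd) (hcont hbc) (hderiv hbc) (hpos hbc) hanti

/-- Lemma A.4 (lem:31): for `0 < β < 1` and `0 ≤ t < a < b < c < d`,
`((d−t)^{1−β} − (d−a)^{1−β}) / ((d−a)^{1−β} − (d−b)^{1−β})
  > ((c−t)^{1−β} − (c−a)^{1−β}) / ((c−a)^{1−β} − (c−b)^{1−β})`. -/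
theorem stmt15 (β t a b c d : ℝ) (hβ0 : 0 < β) (hβ1 : β < 1)
    (ht : 0 ≤ t) (hta : t < a) (hab : a < b) (hbc : b < c) (hcd : c < d) :
    ((d - t) ^ (1 - β) - (d - a) ^ (1 - β)) / ((d - a) ^ (1 - β) - (d - b) ^ (1 - β)) >
      ((c - t) ^ (1 - β) - (c - a) ^ (1 - β)) / ((c - a) ^ (1 - β) - (c - b) ^ (1 - β)) :=
  stmt15_general hβ0 hβ1.ne hta hab hbc hcd
end
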